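/- arXiv:2008.12944 — 2 statements merged into one kernel-verified Lean document; each statement's English description precedes it below -/
import Mathlib

section
/- Let k be an algebraically closed field and S = k[x_1,...,x_r]. Suppose D = (p_{ij}) is an 8×8 matrix with entries in S satisfying the standard conditions, and suppose moreover that either: (A) p_{ij} = 0 unless (i = 1 and 2 ≤ j ≤ 8) or (2 ≤ i ≤ 5 and 6 ≤ j ≤ 8); or (B) p_{ij} = 0 unless (1 ≤ i ≤ 3 and 4 ≤ j ≤ 8) or (4 ≤ i ≤ 7 and j = 8). Then r < 3, i.e., r ≤ 2. -/
open MvPolynomial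

/-- The "standard conditions" on an `8 × 8` matrix `D = (p_{ij})` with entries in
`S = k[x_1, ..., x_r]`:
(1) `D` is strictly upper triangular;
(2) `D² = 0`;
(3) every entry vanishes at the origin;
(4) for every nonzero point `a ∈ k^r` the evaluated matrix `D(a)` has rank `4`;
(5) there is a nonincreasing `8`-tuple of integers `(d_1, ..., d_8)` such that each `p_{ij}`
is homogeneous of degree `d_i - d_j + 1` (the zero polynomial being homogeneous of
any degree). -/
def StandardConditions {k : Type*} [Field k] {r : ℕ}
    (D : Matrix (Fin 8) (Fin 8) (MvPolynomial (Fin r) k)) : Prop :=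
  (∀ i j : Fin 8, j ≤ i → D i j = 0) ∧
  D * D = 0 ∧
  (∀ i j : Fin 8, eval (0 : Fin r → k) (D i j) = 0) ∧
  (∀ a : Fin r → k, a ≠ 0 → (D.map (eval a)).rank = 4) ∧
  (∃ d : Fin 8 → ℤ, Antitone d ∧
    ∀ i j : Fin 8, D i j = 0 ∨
      (0 ≤ d i - d j + 1 ∧ (D i j).IsHomogeneous (d i - d j + 1).toNat))

/-!
A matrix of shape (A) consists of a row `v`, a block `M` and a corner entry, and its square vanishes
iff `v M = 0`; shape (B) is its reflection in the antidiagonal. The rank condition makes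
`S^n → S^(n+1) → S`, with maps `M` and `v`, exact at every point other than the origin. With three
or more variables, `S` has depth at least three at the origin, so exactness extends across it: first
in the middle and then on the right. Thus the entries of `v` generate the unit ideal, although they
all vanish at the origin.
-/

section RegularSequences

open RingTheory.Sequence Function
open scoped Pointwise

variable {R F G H : Type*} [CommRing R] [AddCommGroup F] [Module R F] [AddCommGroup G] [Module R G]
  [AddCommGroup H] [Module R H] {x y z : R}

theorem isWeaklyRegular_iff_mem_of_smul_mem {rs : List R} :
    IsWeaklyRegular F rs ↔ ∀ i (hi : i < rs.length) (m : F),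
      rs[i] • m ∈ (Ideal.ofList (rs.take i) • ⊤ : Submodule R F) →
        m ∈ (Ideal.ofList (rs.take i) • ⊤ : Submodule R F) := by
  simp only [isWeaklyRegular_iff, isSMulRegular_quotient_iff_mem_of_smul_mem]

theorem isWeaklyRegular_of_flat [Module.Flat R F] {rs : List R} (h : IsWeaklyRegular R rs) :
    IsWeaklyRegular F rs :=
  ((TensorProduct.rid R F).isWeaklyRegular_congr rs).mp h.isWeaklyRegular_lTensor

theorem mem_ofList_pair_smul_top {m : F} :
    m ∈ (Ideal.ofList [x, y] • ⊤ : Submodule R F) ↔ ∃ p q : F, x • p + y • q = m := by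
  rw [Ideal.ofList_cons_smul, Ideal.ofList_singleton, Submodule.ideal_span_singleton_smul,
    Submodule.mem_sup]
  simp [Submodule.mem_smul_pointwise_iff_exists]

theorem exists_eq_smul_of_smul_eq_smul (h : IsWeaklyRegular F [x, y]) {a b : F}
    (hab : x • a = y • b) : ∃ c, a = y • c ∧ b = x • c := by
  obtain ⟨hx, hy⟩ := (isWeaklyRegular_cons_iff F x [y]).mp h
  have hb : b ∈ x • (⊤ : Submodule R F) :=
    mem_of_isSMulRegular_quotient_of_smul_mem ((isWeaklyRegular_singleton_iff _ _).mp hy)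
      (hab ▸ Submodule.smul_mem_pointwise_smul a x ⊤ trivial)
  obtain ⟨c, -, rfl⟩ := (Submodule.mem_smul_pointwise_iff_exists ..).mp hb
  exact ⟨c, hx (by simpa only [smul_comm x y] using hab), rfl⟩

theorem exists_koszul_primitive (h : IsWeaklyRegular F [x, y, z]) {a b c : F}
    (habc : x • c - y • b + z • a = 0) :
    ∃ p q s, a = x • q - y • p ∧ b = x • s - z • p ∧ c = y • s - z • q := by
  have hxy : IsWeaklyRegular F [x, y] := ((isWeaklyRegular_append_iff F [x, y] [z]).mp h).1
  have ha : z • a ∈ (Ideal.ofList [x, y] • ⊤ : Submodule R F) :=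
    mem_ofList_pair_smul_top.mpr ⟨-c, b, by linear_combination (norm := module) -habc⟩
  obtain ⟨q, p, rfl⟩ := mem_ofList_pair_smul_top.mp
    (isWeaklyRegular_iff_mem_of_smul_mem.mp h 2 (by simp) a ha)
  obtain ⟨s, hc, hb⟩ := exists_eq_smul_of_smul_eq_smul hxy
    (show x • (c + z • q) = y • (b - z • p) by linear_combination (norm := module) habc)
  refine ⟨-p, q, s, by module, ?_, ?_⟩
  · linear_combination (norm := module) hb
  · linear_combination (norm := module) hc

theorem mem_range_of_injective_of_smul_mem {f : F →ₗ[R] G} (hf : Injective f)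
    (hF : IsWeaklyRegular F [x, y]) (hG : IsSMulRegular G x) {s : G}
    (hx : x • s ∈ f.range) (hy : y • s ∈ f.range) : s ∈ f.range := by
  obtain ⟨t, ht⟩ := hx
  obtain ⟨u, hu⟩ := hy
  obtain ⟨c, -, rfl⟩ := exists_eq_smul_of_smul_eq_smul hF
    (show x • u = y • t from hf (by rw [map_smul, map_smul, ht, hu, smul_comm]))
  exact ⟨c, hG (by simpa [smul_comm x y] using ht)⟩

/- Diagram chase in the Koszul complexes of `F` and `G`: lifting `x • h, y • h, z • h` through `g`
gives a 1-cochain of `G`, whose coboundary comes from a 2-cocycle of `F`. A primitive of the latter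
corrects the lift to a 1-cocycle, hence to a multiple of `(x, y, z)`. -/
theorem mem_range_of_exact_of_smul_mem {f : F →ₗ[R] G} {g : G →ₗ[R] H} (hf : Injective f)
    (hfg : Exact f g) (hF : IsWeaklyRegular F [x, y, z]) (hG : IsWeaklyRegular G [x, y])
    (hH : IsSMulRegular H x) {h : H} (hx : x • h ∈ g.range) (hy : y • h ∈ g.range)
    (hz : z • h ∈ g.range) : h ∈ g.range := by
  obtain ⟨sx, hsx⟩ := hx
  obtain ⟨sy, hsy⟩ := hy
  obtain ⟨sz, hsz⟩ := hz
  obtain ⟨a, ha⟩ := (hfg (x • sy - y • sx)).mp (by simp [hsx, hsy, smul_comm x y])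
  obtain ⟨b, hb⟩ := (hfg (x • sz - z • sx)).mp (by simp [hsx, hsz, smul_comm x z])
  obtain ⟨c, hc⟩ := (hfg (y • sz - z • sy)).mp (by simp [hsy, hsz, smul_comm y z])
  have hcocycle : x • c - y • b + z • a = 0 := by
    apply hf
    simp only [map_add, map_sub, map_smul, map_zero, ha, hb, hc]
    module
  obtain ⟨p, q, -, rfl, -, -⟩ := exists_koszul_primitive hF hcocycle
  simp only [map_sub, map_smul] at ha
  obtain ⟨σ, -, hσ⟩ := exists_eq_smul_of_smul_eq_smul hG
    (show x • (sy - f q) = y • (sx - f p) by linear_combination (norm := module) -ha)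
  refine ⟨σ, hH ?_⟩
  calc x • g σ = g (sx - f p) := by rw [hσ, map_smul]
    _ = x • h := by rw [map_sub, hfg.apply_apply_eq_zero, sub_zero, hsx]

theorem mem_of_forall_mem_pow_smul_mem {I : Ideal R} {N : Submodule R F}
    (hN : ∀ t : F, (∀ r ∈ I, r • t ∈ N) → t ∈ N) {s : F} {n : ℕ}
    (hs : ∀ r ∈ I ^ n, r • s ∈ N) : s ∈ N := by
  induction n with
  | zero => simpa using hs 1 (by simp)
  | succ n ih =>
    refine ih fun r hr ↦ hN _ fun r' hr' ↦ ?_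
    rw [smul_smul]
    exact hs _ (pow_succ' I n ▸ Ideal.mul_mem_mul hr' hr)

end RegularSequences

section PuncturedAffineSpace

open RingTheory.Sequence

variable {R k σ : Type*} [CommRing R] [Field k]

theorem mem_span_X_image_of_X_mul_mem {s : Set σ} {i : σ} (hi : i ∉ s) {p : MvPolynomial σ R}
    (hp : X i * p ∈ Ideal.span (X '' s : Set (MvPolynomial σ R))) :
    p ∈ Ideal.span (X '' s : Set (MvPolynomial σ R)) := by
  classical
  rw [mem_ideal_span_X_image] at hp ⊢
  intro m hm
  obtain ⟨j, hj, hmj⟩ := hp (Finsupp.single i 1 + m) (by simpa [support_X_mul] using hm)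
  have hij : i ≠ j := fun h ↦ hi (h ▸ hj)
  exact ⟨j, hj, by simpa [hij] using hmj⟩

theorem isWeaklyRegular_X {l : List σ} (hl : l.Nodup) :
    IsWeaklyRegular (MvPolynomial σ R) (l.map X : List (MvPolynomial σ R)) := by
  have ofList_map_X (l' : List σ) : (Ideal.ofList (l'.map X) : Ideal (MvPolynomial σ R)) =
      Ideal.span (X '' {i | i ∈ l'}) := congrArg Ideal.span (by ext; simp)
  refine isWeaklyRegular_iff_mem_of_smul_mem.mpr fun i hi p hp ↦ ?_
  rw [← List.map_take, ofList_map_X, smul_eq_mul, Ideal.mul_top] at hp ⊢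
  refine mem_span_X_image_of_X_mul_mem (i := l[i]'(by simpa using hi)) ?_ (by simpa using hp)
  simpa [List.mem_take_iff_getElem] using fun j hj hjl h ↦ by
    have := (hl.getElem_inj_iff).mp h
    omega

theorem idealOfVars_le_radical [IsAlgClosed k] [Finite σ] {J : Ideal (MvPolynomial σ k)}
    (hJ : ∀ a : σ → k, a ≠ 0 → ∃ p ∈ J, eval a p ≠ 0) : idealOfVars σ k ≤ J.radical := by
  rw [← vanishingIdeal_zeroLocus_eq_radical (K := k) J, idealOfVars, Ideal.span_le]
  rintro _ ⟨i, rfl⟩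
  refine mem_vanishingIdeal_iff.mpr fun a ha ↦ ?_
  obtain rfl : a = 0 := by
    by_contra h0
    obtain ⟨p, hp, hpa⟩ := hJ a h0
    exact hpa (by simpa [aeval_eq_eval] using ha p hp)
  simp

variable {F G : Type*} [AddCommGroup F] [Module (MvPolynomial σ k) F] [AddCommGroup G]
  [Module (MvPolynomial σ k) G]

theorem mem_of_locally_mem [IsAlgClosed k] [Finite σ] {N : Submodule (MvPolynomial σ k) F}
    (hN : ∀ t : F, (∀ i, (X i : MvPolynomial σ k) • t ∈ N) → t ∈ N) {s : F}
    (hs : ∀ a : σ → k, a ≠ 0 → ∃ p : MvPolynomial σ k, eval a p ≠ 0 ∧ p • s ∈ N) : s ∈ N := by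
  obtain ⟨n, hn⟩ := Ideal.exists_pow_le_of_le_radical_of_fg
    (idealOfVars_le_radical (J := N.comap (LinearMap.toSpanSingleton _ F s))
      fun a ha ↦ (hs a ha).imp fun _ hp ↦ ⟨hp.2, hp.1⟩) (idealOfVars_fg σ k)
  refine mem_of_forall_mem_pow_smul_mem (I := idealOfVars σ k) (fun t ht ↦ hN t fun i ↦ ht _ ?_)
    fun r hr ↦ hn hr
  exact Ideal.subset_span ⟨i, rfl⟩

/- The resolution `0 → F → G → S → S ⧸ range g` has length two, so `S ⧸ range g` has positive depth
as soon as there are three variables; being supported at the origin it must vanish. -/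
theorem surjective_of_locally_exact [IsAlgClosed k] [Finite σ] (hσ : 3 ≤ Nat.card σ)
    [Module.Flat (MvPolynomial σ k) F] [Module.Flat (MvPolynomial σ k) G]
    {f : F →ₗ[MvPolynomial σ k] G} {g : G →ₗ[MvPolynomial σ k] MvPolynomial σ k}
    (hf : Function.Injective f) (hfg : g ∘ₗ f = 0)
    (hexact : ∀ a : σ → k, a ≠ 0 → ∀ s ∈ g.ker, ∃ p, eval a p ≠ 0 ∧ p • s ∈ f.range)
    (hsurj : ∀ a : σ → k, a ≠ 0 → ∃ s, eval a (g s) ≠ 0) : Function.Surjective g := by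
  obtain ⟨x, y, z, hxy, hxz, hyz⟩ : ∃ x y z : σ, x ≠ y ∧ x ≠ z ∧ y ≠ z := by
    cases nonempty_fintype σ
    exact Fintype.two_lt_card_iff.mp (by rwa [Nat.card_eq_fintype_card] at hσ)
  have hreg2 : IsWeaklyRegular (MvPolynomial σ k) [X x, X y] :=
    isWeaklyRegular_X (l := [x, y]) (by simp [hxy])
  have hreg3 : IsWeaklyRegular (MvPolynomial σ k) [X x, X y, X z] :=
    isWeaklyRegular_X (l := [x, y, z]) (by simp [hxy, hxz, hyz])
  have hexact' : Function.Exact f g := by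
    refine LinearMap.exact_iff.mpr (le_antisymm (fun s hs ↦ ?_)
      (LinearMap.range_le_ker_iff.mpr hfg))
    exact mem_of_locally_mem (fun t ht ↦ mem_range_of_injective_of_smul_mem hf
      (isWeaklyRegular_of_flat hreg2) (Module.Flat.isSMulRegular_of_isRegular isRegular_X)
      (ht x) (ht y)) fun a ha ↦ hexact a ha s hs
  have hone : 1 ∈ g.range := by
    refine mem_of_locally_mem (fun t ht ↦ mem_range_of_exact_of_smul_mem hf hexact'
      (isWeaklyRegular_of_flat hreg3) (isWeaklyRegular_of_flat hreg2) isRegular_X.left.isSMulRegular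
      (ht x) (ht y) (ht z)) fun a ha ↦ ?_
    obtain ⟨s, hs⟩ := hsurj a ha
    exact ⟨g s, hs, s, by simp⟩
  exact LinearMap.range_eq_top.mp ((Ideal.eq_top_iff_one _).mpr hone)

end PuncturedAffineSpace

section BlockDifferential

open Matrix

variable {R S K m n ι : Type*} [CommRing R] [CommRing S] [Field K]

theorem exists_mulVec_eq_of_mulVec_eq_zero [Fintype ι] {A : Matrix ι ι K} (hA : A * A = 0)
    (hrank : 2 * A.rank = Fintype.card ι) {x : ι → K} (hx : A *ᵥ x = 0) : ∃ y, A *ᵥ y = x := by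
  have hle : A.mulVecLin.range ≤ A.mulVecLin.ker :=
    LinearMap.range_le_ker_iff.mpr (by rw [← mulVecLin_mul, hA, mulVecLin_zero])
  have hdim := A.mulVecLin.finrank_range_add_finrank_ker
  rw [Module.finrank_fintype_fun_eq_card] at hdim
  have heq : A.mulVecLin.range = A.mulVecLin.ker :=
    Submodule.eq_of_le_of_finrank_eq hle (by unfold rank at hrank; omega)
  exact heq.ge hx

/-- The square matrix with block rows `(0, v, w)`, `(0, 0, M)` and `(0, 0, 0)`: up to the
correction term `w`, the total differential of the complex `R^n → R^m → R` with maps `M` and `v`. -/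
def blockDifferential (v : m → R) (w : n → R) (M : Matrix m n R) :
    Matrix (Fin 1 ⊕ (m ⊕ n)) (Fin 1 ⊕ (m ⊕ n)) R :=
  fromBlocks 0 (replicateRow (Fin 1) (Sum.elim v w)) 0 (fromBlocks 0 M 0 0)

theorem blockDifferential_map (φ : R →+* S) (v : m → R) (w : n → R) (M : Matrix m n R) :
    (blockDifferential v w M).map φ = blockDifferential (φ ∘ v) (φ ∘ w) (M.map φ) := by
  ext (_ | _ | _) (_ | _ | _) <;> simp [blockDifferential]

theorem eq_blockDifferential {D : Matrix (Fin 1 ⊕ (m ⊕ n)) (Fin 1 ⊕ (m ⊕ n)) R}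
    (hfirst : ∀ x, D x (Sum.inl 0) = 0)
    (hmiddle : ∀ i j, D (Sum.inr (Sum.inl i)) (Sum.inr (Sum.inl j)) = 0)
    (hlast : ∀ i x, D (Sum.inr (Sum.inr i)) x = 0) :
    D = blockDifferential (D.toBlocks₁₂ 0 ∘ Sum.inl) (D.toBlocks₁₂ 0 ∘ Sum.inr)
      D.toBlocks₂₂.toBlocks₁₂ := by
  ext1 (x | i | i) (y | j | j) <;>
    simp [blockDifferential, toBlocks₁₂, toBlocks₂₂, Subsingleton.elim _ (0 : Fin 1), hfirst,
      hmiddle, hlast]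

variable [Fintype m] [Fintype n] {v : m → R} {w : n → R} {M : Matrix m n R}

theorem blockDifferential_mulVec (x : Fin 1 → R) (s : m → R) (t : n → R) :
    blockDifferential v w M *ᵥ Sum.elim x (Sum.elim s t) =
      Sum.elim (fun _ ↦ v ⬝ᵥ s + w ⬝ᵥ t) (Sum.elim (M *ᵥ t) 0) := by
  ext (_ | _ | _) <;> simp [blockDifferential, mulVec, dotProduct]

theorem vecMul_eq_zero_of_blockDifferential_mul_self
    (hsq : blockDifferential v w M * blockDifferential v w M = 0) : v ᵥ* M = 0 := by
  ext j
  have h := congr_fun₂ hsq (Sum.inl 0) (Sum.inr (Sum.inr j))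
  simpa [blockDifferential, Matrix.mul_apply, vecMul, dotProduct] using h

theorem exists_mulVec_eq_of_blockDifferential_exact
    (hexact : ∀ x, blockDifferential v w M *ᵥ x = 0 → ∃ y, blockDifferential v w M *ᵥ y = x)
    {s : m → R} {t : n → R} (hst : v ⬝ᵥ s + w ⬝ᵥ t = 0) (ht : M *ᵥ t = 0) :
    t = 0 ∧ ∃ u, M *ᵥ u = s := by
  obtain ⟨y, hy⟩ := hexact (Sum.elim 0 (Sum.elim s t)) (by
    rw [blockDifferential_mulVec, hst, ht]; ext (_ | _ | _) <;> rfl)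
  rw [← Sum.elim_comp_inl_inr y, ← Sum.elim_comp_inl_inr (y ∘ Sum.inr),
    blockDifferential_mulVec] at hy
  exact ⟨funext fun i ↦ (congr_fun hy (Sum.inr (Sum.inr i))).symm,
    _, funext fun i ↦ congr_fun hy (Sum.inr (Sum.inl i))⟩

section Field

variable {v : m → K} {w : n → K} {M : Matrix m n K}

theorem ne_zero_of_blockDifferential_exact (hmn : Fintype.card n < Fintype.card m)
    (hexact : ∀ x, blockDifferential v w M *ᵥ x = 0 → ∃ y, blockDifferential v w M *ᵥ y = x) :
    v ≠ 0 := by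
  rintro rfl
  have hsurj : Function.Surjective M.mulVecLin := fun s ↦
    (exists_mulVec_eq_of_blockDifferential_exact hexact (s := s) (t := 0) (by simp) (by simp)).2
  exact hmn.not_ge (card_le_of_surjective K M.mulVecLin hsurj)

theorem mulVec_injective_of_blockDifferential_exact (hmn : Fintype.card n < Fintype.card m)
    (hexact : ∀ x, blockDifferential v w M *ᵥ x = 0 → ∃ y, blockDifferential v w M *ᵥ y = x) :
    Function.Injective M.mulVec := by
  refine (injective_iff_map_eq_zero M.mulVecLin).mpr fun t ht ↦ ?_
  obtain ⟨i, hi⟩ := Function.ne_iff.mp (ne_zero_of_blockDifferential_exact hmn hexact)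
  classical
  exact (exists_mulVec_eq_of_blockDifferential_exact hexact
    (s := Pi.single i (-(w ⬝ᵥ t) / v i)) (by simp [mul_div_cancel₀ _ hi]) ht).1

end Field

end BlockDifferential

section AdjoinBasisCol

open Matrix

variable {R K m n : Type*} [CommRing R] [Field K] [DecidableEq m]

/-- The matrix `M` with the `i`-th standard basis vector adjoined as a last column. For
`m = n ⊕ Fin 1` its determinant is, up to sign, the maximal minor of `M` omitting row `i`, and it
serves as the denominator when solving `M *ᵥ t = s`. -/
def adjoinBasisCol (M : Matrix m n R) (i : m) : Matrix m (n ⊕ Fin 1) R :=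
  fromCols M (replicateCol (Fin 1) (Pi.single i 1))

theorem adjoinBasisCol_map {S : Type*} [CommRing S] (φ : R →+* S) (M : Matrix m n R) (i : m) :
    (adjoinBasisCol M i).map φ = adjoinBasisCol (M.map φ) i := by
  ext j (_ | _) <;> simp [adjoinBasisCol, Pi.single_apply, apply_ite φ]

variable [Fintype n]

theorem adjoinBasisCol_mulVec (M : Matrix m n R) (i : m) (u : n ⊕ Fin 1 → R) :
    adjoinBasisCol M i *ᵥ u = M *ᵥ (u ∘ Sum.inl) + Pi.single i (u (Sum.inr 0)) := by
  ext j
  simp [adjoinBasisCol, mulVec, dotProduct, Pi.single_apply]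

theorem dotProduct_adjoinBasisCol_mulVec [Fintype m] {v : m → R} {M : Matrix m n R}
    (hvM : v ᵥ* M = 0) (i : m) (u : n ⊕ Fin 1 → R) :
    v ⬝ᵥ (adjoinBasisCol M i *ᵥ u) = v i * u (Sum.inr 0) := by
  simp [adjoinBasisCol_mulVec, dotProduct_add, dotProduct_mulVec, hvM]

variable [DecidableEq n]

theorem mulVec_injective_of_det_adjoinBasisCol_ne_zero [IsDomain R] {M : Matrix (n ⊕ Fin 1) n R}
    {i : n ⊕ Fin 1} (hdet : (adjoinBasisCol M i).det ≠ 0) : Function.Injective M.mulVec := by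
  refine (injective_iff_map_eq_zero M.mulVecLin).mpr fun t ht ↦ ?_
  have h : Sum.elim t 0 = 0 := eq_zero_of_mulVec_eq_zero hdet (by
    rw [adjoinBasisCol_mulVec]; simpa using ht)
  exact funext fun j ↦ congr_fun h (Sum.inl j)

theorem det_adjoinBasisCol_ne_zero [IsDomain R] {v : n ⊕ Fin 1 → R} {M : Matrix (n ⊕ Fin 1) n R}
    (hvM : v ᵥ* M = 0) (hM : Function.Injective M.mulVec) {i : n ⊕ Fin 1} (hi : v i ≠ 0) :
    (adjoinBasisCol M i).det ≠ 0 := by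
  intro hdet
  obtain ⟨u, hu, hPu⟩ := exists_mulVec_eq_zero_iff.mpr hdet
  have hlast : u (Sum.inr 0) = 0 := by
    simpa [hPu, hi] using (dotProduct_adjoinBasisCol_mulVec hvM i u).symm
  have hinit : u ∘ Sum.inl = 0 := hM (by simpa [adjoinBasisCol_mulVec, hlast] using hPu)
  refine hu (funext ?_)
  rintro (j | j)
  · exact congr_fun hinit j
  · rwa [Subsingleton.elim j 0]

theorem exists_mulVec_eq_det_adjoinBasisCol_smul [IsDomain R] {v : n ⊕ Fin 1 → R}
    {M : Matrix (n ⊕ Fin 1) n R} (hvM : v ᵥ* M = 0) {i : n ⊕ Fin 1} (hi : v i ≠ 0)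
    {s : n ⊕ Fin 1 → R} (hs : v ⬝ᵥ s = 0) : ∃ t, M *ᵥ t = (adjoinBasisCol M i).det • s := by
  set u := (adjoinBasisCol M i).adjugate *ᵥ s with hu
  have hPu : adjoinBasisCol M i *ᵥ u = (adjoinBasisCol M i).det • s := by
    rw [hu, mulVec_mulVec, mul_adjugate, smul_mulVec, one_mulVec]
  have hlast : u (Sum.inr 0) = 0 := by
    simpa [hPu, hs, hi] using (dotProduct_adjoinBasisCol_mulVec hvM i u).symm
  exact ⟨u ∘ Sum.inl, by simpa [adjoinBasisCol_mulVec, hlast] using hPu⟩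

end AdjoinBasisCol

section RankBound

open Matrix

variable {k σ n : Type*} [Field k] [Fintype n] {v : n ⊕ Fin 1 → MvPolynomial σ k}
  {w : n → MvPolynomial σ k} {M : Matrix (n ⊕ Fin 1) n (MvPolynomial σ k)}

theorem exists_eval_det_adjoinBasisCol_ne_zero [DecidableEq n]
    (hsq : blockDifferential v w M * blockDifferential v w M = 0) {a : σ → k}
    (hrank : ((blockDifferential v w M).map (eval a)).rank = Fintype.card n + 1) :
    ∃ i, eval a (v i) ≠ 0 ∧ eval a (adjoinBasisCol M i).det ≠ 0 := by
  replace hsq := congrArg (fun A ↦ A.map (eval a)) hsq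
  simp only [Matrix.map_mul, Matrix.map_zero _ (map_zero (eval a)), blockDifferential_map] at hsq
  rw [blockDifferential_map] at hrank
  have hexact x := exists_mulVec_eq_of_mulVec_eq_zero hsq (x := x) (by simp [hrank]; omega)
  obtain ⟨i, hi⟩ := Function.ne_iff.mp (ne_zero_of_blockDifferential_exact (by simp) hexact)
  refine ⟨i, hi, ?_⟩
  rw [RingHom.map_det, RingHom.mapMatrix_apply, adjoinBasisCol_map]
  exact det_adjoinBasisCol_ne_zero (vecMul_eq_zero_of_blockDifferential_mul_self hsq)
    (mulVec_injective_of_blockDifferential_exact (by simp) hexact) hi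

variable [IsAlgClosed k] [Finite σ]

theorem card_lt_three_of_blockDifferential (hv : ∀ i, eval 0 (v i) = 0)
    (hsq : blockDifferential v w M * blockDifferential v w M = 0)
    (hrank : ∀ a : σ → k, a ≠ 0 →
      ((blockDifferential v w M).map (eval a)).rank = Fintype.card n + 1) : Nat.card σ < 3 := by
  classical
  have hvM := vecMul_eq_zero_of_blockDifferential_mul_self hsq
  have exists_det (a : σ → k) (ha : a ≠ 0) :=
    exists_eval_det_adjoinBasisCol_ne_zero hsq (hrank a ha)
  by_contra! hσ
  let g := dotProductBilin (MvPolynomial σ k) (MvPolynomial σ k) v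
  have hg : Function.Surjective g := by
    refine surjective_of_locally_exact hσ (f := M.mulVecLin) ?_ ?_ (fun a ha s hs ↦ ?_)
      fun a ha ↦ ?_
    · have : Nonempty σ := (Nat.card_pos_iff.mp (by omega)).1
      obtain ⟨i, -, hdet⟩ := exists_det 1 one_ne_zero
      exact mulVec_injective_of_det_adjoinBasisCol_ne_zero (ne_zero_of_map hdet)
    · exact LinearMap.ext fun t ↦ by simp [g, dotProduct_mulVec, hvM]
    · obtain ⟨i, hi, hdet⟩ := exists_det a ha
      exact ⟨_, hdet, exists_mulVec_eq_det_adjoinBasisCol_smul hvM (ne_zero_of_map hi) hs⟩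
    · obtain ⟨i, hi, -⟩ := exists_det a ha
      exact ⟨Pi.single i 1, by simpa [g] using hi⟩
  obtain ⟨s, hs⟩ := hg 1
  have hzero : eval 0 (v ⬝ᵥ s) = 0 := by
    simp only [dotProduct, map_sum, map_mul, hv, zero_mul, Finset.sum_const_zero]
  exact one_ne_zero (α := k) (by rw [← hzero, ← map_one (eval 0), ← hs]; rfl)

theorem card_lt_three_of_row_column_blocks {n : ℕ}
    {D : Matrix (Fin (2 * n + 2)) (Fin (2 * n + 2)) (MvPolynomial σ k)} (hsq : D * D = 0)
    (h0 : ∀ i j, eval 0 (D i j) = 0)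
    (hrank : ∀ a : σ → k, a ≠ 0 → (D.map (eval a)).rank = n + 1)
    (hzero : ∀ i j : Fin (2 * n + 2),
      ¬((i : ℕ) = 0 ∧ 1 ≤ (j : ℕ) ∨ 1 ≤ (i : ℕ) ∧ (i : ℕ) ≤ n + 1 ∧ n + 2 ≤ (j : ℕ)) →
        D i j = 0) : Nat.card σ < 3 := by
  let e : Fin 1 ⊕ ((Fin n ⊕ Fin 1) ⊕ Fin n) ≃ Fin (2 * n + 2) :=
    ((Equiv.refl _).sumCongr ((finSumFinEquiv.sumCongr (Equiv.refl _)).trans finSumFinEquiv)).trans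
      (finSumFinEquiv.trans (finCongr (by omega)))
  have he_first (x : Fin 1) : (e (Sum.inl x) : ℕ) = 0 := by simp [e]
  have he_middle (i : Fin n ⊕ Fin 1) : (e (Sum.inr (Sum.inl i)) : ℕ) = 1 + finSumFinEquiv i := by
    simp [e]
  have he_last (j : Fin n) : (e (Sum.inr (Sum.inr j)) : ℕ) = 1 + (n + 1 + j) := by simp [e]
  have hD := eq_blockDifferential (D := D.submatrix e e)
    (fun x ↦ hzero _ _ (by grind))
    (fun i i' ↦ hzero _ _ (by grind))
    (fun j x ↦ hzero _ _ (by grind))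
  have hsq_e : D.submatrix e e * D.submatrix e e = 0 := by rw [submatrix_mul_equiv, hsq]; rfl
  have hrank_e (a : σ → k) (ha : a ≠ 0) : ((D.submatrix e e).map (eval a)).rank = n + 1 := by
    rw [← submatrix_map, rank_submatrix, hrank a ha]
  rw [hD] at hsq_e hrank_e
  exact card_lt_three_of_blockDifferential (fun _ ↦ by apply h0) hsq_e
    (by simpa only [Fintype.card_fin] using hrank_e)

theorem statement_10_general {n : ℕ}
    (D : Matrix (Fin (2 * n + 2)) (Fin (2 * n + 2)) (MvPolynomial σ k)) (hsq : D * D = 0)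
    (h0 : ∀ i j, eval 0 (D i j) = 0)
    (hrank : ∀ a : σ → k, a ≠ 0 → (D.map (eval a)).rank = n + 1)
    (hzero : (∀ i j : Fin (2 * n + 2),
        ¬((i : ℕ) = 0 ∧ 1 ≤ (j : ℕ) ∨ 1 ≤ (i : ℕ) ∧ (i : ℕ) ≤ n + 1 ∧ n + 2 ≤ (j : ℕ)) →
        D i j = 0) ∨
      (∀ i j : Fin (2 * n + 2),
        ¬((i : ℕ) < n ∧ n ≤ (j : ℕ) ∨ n ≤ (i : ℕ) ∧ (i : ℕ) ≤ 2 * n ∧ (j : ℕ) = 2 * n + 1) →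
        D i j = 0)) : Nat.card σ < 3 := by
  obtain hzero | hzero := hzero
  · exact card_lt_three_of_row_column_blocks hsq h0 hrank hzero
  · refine card_lt_three_of_row_column_blocks (D := (D.submatrix Fin.revPerm Fin.revPerm)ᵀ) ?_
      (fun i j ↦ h0 _ _) (fun a ha ↦ ?_) fun i j hij ↦ hzero _ _ ?_
    · rw [← transpose_mul, submatrix_mul_equiv, hsq]; rfl
    · rw [transpose_map, ← submatrix_map, rank_transpose, rank_submatrix, hrank a ha]
    · simp only [Fin.revPerm_apply, Fin.val_rev]
      omega

end RankBound

theorem statement_10 {k : Type*} [Field k] [IsAlgClosed k] {r : ℕ}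
    (D : Matrix (Fin 8) (Fin 8) (MvPolynomial (Fin r) k))
    (hstd : StandardConditions D)
    (hzero : (∀ i j : Fin 8,
        ¬((1 ≤ (i : ℕ) + 1 ∧ (i : ℕ) + 1 ≤ 1 ∧ 2 ≤ (j : ℕ) + 1 ∧ (j : ℕ) + 1 ≤ 8) ∨
          (2 ≤ (i : ℕ) + 1 ∧ (i : ℕ) + 1 ≤ 5 ∧ 6 ≤ (j : ℕ) + 1 ∧ (j : ℕ) + 1 ≤ 8)) →
        D i j = 0) ∨
      (∀ i j : Fin 8,
        ¬((1 ≤ (i : ℕ) + 1 ∧ (i : ℕ) + 1 ≤ 3 ∧ 4 ≤ (j : ℕ) + 1 ∧ (j : ℕ) + 1 ≤ 8) ∨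
          (4 ≤ (i : ℕ) + 1 ∧ (i : ℕ) + 1 ≤ 7 ∧ 8 ≤ (j : ℕ) + 1 ∧ (j : ℕ) + 1 ≤ 8)) →
        D i j = 0)) :
    r < 3 := by
  obtain ⟨-, hsq, h0, hrank, -⟩ := hstd
  simpa only [Nat.card_fin] using statement_10_general (n := 3) D hsq h0 hrank
    (hzero.imp (fun h i j _ ↦ h i j (by omega)) fun h i j _ ↦ h i j (by omega))
end

section
/- Let k be an algebraically closed field and S = k[x_1,...,x_r]. Suppose D = (p_{ij}) is an 8×8 matrix with entries in S satisfying the standard conditions, and suppose moreover that either: (A) p_{ij} = 0 unless (1 ≤ i ≤ 2 and 3 ≤ j ≤ 8) or (3 ≤ i ≤ 5 and 6 ≤ j ≤ 8); or (B) p_{ij} = 0 unless (1 ≤ i ≤ 3 and 4 ≤ j ≤ 8) or (4 ≤ i ≤ 6 and 7 ≤ j ≤ 8). Then r < 2, i.e., r ≤ 1. -/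
/-!
In block form `D` is given by `A`, `B`, `C` with `A * C = 0`, and off the origin the rank
hypothesis forces the left kernel of `A(a)` and the right kernel of `C(a)` to be lines. These lines
are spanned by the values of polynomial vectors `u` and `v`: dividing a kernel vector by the gcd of
its entries leaves one that vanishes nowhere off the origin. If the polynomial `u B v` vanishes at
`a`, then `B(a) = A(a) X + Z C(a)` for some `X`, `Z`, so the rank of `D(a)` is at most
`rank A(a) + rank C(a)`, which is too small. Hence `u B v` vanishes at the origin and nowhere else,
which is impossible for a polynomial in at least two variables over an algebraically closed field.
-/

open MvPolynomial

section Rank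

open scoped Matrix

variable {K l m n p q s t : Type*} [Field K]

theorem rank_add_le_rank_add_rank [Fintype n] (A B : Matrix m n K) :
    (A + B).rank ≤ A.rank + B.rank := by
  unfold Matrix.rank
  rw [Matrix.mulVecLin_add]
  exact (Submodule.finrank_mono (LinearMap.range_add_le _ _)).trans
    (Submodule.finrank_add_le_finrank_add_finrank _ _)

theorem rank_mul_mul_add_mul_mul_le [Fintype n] [Fintype p] [Fintype q] [Fintype s] [Fintype t]
    (P : Matrix l n K) (A : Matrix n p K) (X : Matrix p q K)
    (R : Matrix l s K) (C : Matrix s t K) (Y : Matrix t q K) :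
    (P * A * X + R * C * Y).rank ≤ A.rank + C.rank :=
  (rank_add_le_rank_add_rank _ _).trans <| add_le_add
    ((Matrix.rank_mul_le_left _ _).trans (Matrix.rank_mul_le_right _ _))
    ((Matrix.rank_mul_le_left _ _).trans (Matrix.rank_mul_le_right _ _))

theorem rank_fromBlocks_mul_zero₂₁_le [Fintype l] [Finite m] [Fintype n] [Fintype p] [Fintype q]
    (A : Matrix m l K) (Y : Matrix l n K) (X : Matrix l p K) (Z : Matrix m q K) (R : Matrix s q K)
    (C : Matrix q p K) :
    (Matrix.fromBlocks (A * Y) (A * X + Z * C) 0 (R * C)).rank ≤ A.rank + C.rank := by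
  classical
  have := Fintype.ofFinite m
  have factorization : Matrix.fromBlocks (A * Y) (A * X + Z * C) 0 (R * C) =
      (Matrix.fromRows 1 0 : Matrix (m ⊕ s) m K) * A * Matrix.fromCols Y X +
        Matrix.fromRows Z R * C * (Matrix.fromCols 0 1 : Matrix p (n ⊕ p) K) := by
    ext (i | i) (j | j) <;> simp [Matrix.fromRows_mul, Matrix.mul_fromCols]
  rw [factorization]
  exact rank_mul_mul_add_mul_mul_le _ _ _ _ _ _

theorem rank_fromBlocks_zero₂₁_le_card_add_rank [Fintype m] [Fintype n] [Fintype p] [Finite q]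
    (A : Matrix m n K) (B : Matrix m p K) (C : Matrix q p K) :
    (Matrix.fromBlocks A B 0 C).rank ≤ Fintype.card m + C.rank := by
  classical
  have := Fintype.ofFinite q
  have h := rank_fromBlocks_mul_zero₂₁_le (1 : Matrix m m K) A B 0 (1 : Matrix q q K) C
  rwa [Matrix.one_mul, Matrix.one_mul, Matrix.one_mul, Matrix.zero_mul, add_zero,
    Matrix.rank_one] at h

theorem rank_fromBlocks_zero₂₁_le_rank_add_card [Finite m] [Fintype n] [Fintype p]
    (A : Matrix m n K) (B : Matrix m p K) (C : Matrix q p K) :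
    (Matrix.fromBlocks A B 0 C).rank ≤ A.rank + Fintype.card p := by
  classical
  have h := rank_fromBlocks_mul_zero₂₁_le A (1 : Matrix n n K) 0 B C (1 : Matrix p p K)
  rwa [Matrix.mul_one, Matrix.mul_one, Matrix.mul_one, Matrix.mul_zero, zero_add,
    Matrix.rank_one] at h

theorem rank_le_rank_submatrix_left [Finite l] [Finite m] [Fintype n] (M : Matrix m n K)
    (f : l → m) (hf : ∀ i ∉ Set.range f, M i = 0) : M.rank ≤ (M.submatrix f id).rank := by
  rw [Matrix.rank_eq_finrank_span_row, Matrix.rank_eq_finrank_span_row]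
  refine Submodule.finrank_mono (Submodule.span_le.2 ?_)
  rintro _ ⟨i, rfl⟩
  by_cases hi : i ∈ Set.range f
  · obtain ⟨x, rfl⟩ := hi
    exact Submodule.subset_span ⟨x, rfl⟩
  · simp [Matrix.row, hf i hi]

theorem rank_le_rank_submatrix [Finite l] [Finite m] [Fintype n] [Fintype p] (M : Matrix m n K)
    (f : l → m) (g : p → n) (hf : ∀ i ∉ Set.range f, M i = 0) (hg : ∀ j ∉ Set.range g, Mᵀ j = 0) :
    M.rank ≤ (M.submatrix f g).rank := by
  have := Fintype.ofFinite m
  have := Fintype.ofFinite l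
  refine (rank_le_rank_submatrix_left M f hf).trans ?_
  rw [← Matrix.rank_transpose, ← Matrix.rank_transpose (M.submatrix f g)]
  exact rank_le_rank_submatrix_left (M.submatrix f id)ᵀ g fun j hj =>
    funext fun i => congrFun (hg j hj) (f i)

theorem exists_vecMul_eq_zero_of_rank_lt_card [Fintype m] [Fintype n] {A : Matrix m n K}
    (hA : A.rank < Fintype.card m) :
    ∃ u ≠ 0, u ᵥ* A = 0 := by
  by_contra! h
  have rows_independent : LinearIndependent K A.row :=
    Matrix.vecMul_injective_iff.1 <| (injective_iff_map_eq_zero A.vecMulLinear).2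
      fun u hu => by_contra fun hne => h u hne hu
  exact hA.ne rows_independent.rank_matrix

theorem exists_mul_add_vecMulVec_eq_one [Fintype m] [DecidableEq m] [Fintype n] {A : Matrix m n K}
    (hA : A.rank + 1 = Fintype.card m) :
    ∃ (Y : Matrix n m K) (b c : m → K), A * Y + Matrix.vecMulVec b c = 1 := by
  have finrank_range : Module.finrank K (LinearMap.range A.mulVecLin) + 1 =
      Module.finrank K (m → K) := by
    rw [Module.finrank_fintype_fun_eq_card]
    exact hA
  obtain ⟨b, -, hb⟩ : ∃ b ∈ (⊤ : Submodule K (m → K)), b ∉ LinearMap.range A.mulVecLin := by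
    refine SetLike.exists_of_lt (lt_top_iff_ne_top.2 fun h => ?_)
    rw [h, finrank_top] at finrank_range
    omega
  have sup_eq_top : LinearMap.range A.mulVecLin ⊔ Submodule.span K {b} = ⊤ := by
    refine Submodule.eq_top_of_finrank_eq (le_antisymm (Submodule.finrank_le _) ?_)
    rw [← finrank_range]
    refine Submodule.finrank_lt_finrank_of_lt (left_lt_sup.2 fun h => hb ?_)
    exact h (Submodule.mem_span_singleton_self b)
  have decompose : ∀ j, ∃ (y : n → K) (c : K), A *ᵥ y + c • b = Pi.single j 1 := by
    intro j
    have hj : Pi.single j 1 ∈ LinearMap.range A.mulVecLin ⊔ Submodule.span K {b} :=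
      sup_eq_top ▸ Submodule.mem_top
    obtain ⟨_, ⟨y, rfl⟩, _, hc, hsum⟩ := Submodule.mem_sup.1 hj
    obtain ⟨c, rfl⟩ := Submodule.mem_span_singleton.1 hc
    exact ⟨y, c, hsum⟩
  choose y c h using decompose
  refine ⟨(Matrix.of y)ᵀ, b, c, ?_⟩
  ext i j
  simpa [Matrix.mul_apply, Matrix.mulVec, dotProduct, Matrix.vecMulVec_apply, Matrix.one_apply,
    Pi.single_apply, mul_comm] using congrFun (h j) i

end Rank

section LeftKernel

open scoped Matrix

variable {R K m n : Type*} [CommRing R] [Field K]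

section

variable [Fintype m] [DecidableEq m] [Fintype n]

theorem det_smul_eq_dotProduct_smul_of_vecMul_eq_zero {A : Matrix m n R} {u : m → R}
    (hu : u ᵥ* A = 0) (Y : Matrix n m R) (b c : m → R) :
    (A * Y + Matrix.vecMulVec b c).det • u =
      (u ⬝ᵥ b) • (c ᵥ* (A * Y + Matrix.vecMulVec b c).adjugate) := by
  set Q := A * Y + Matrix.vecMulVec b c with hQ
  have vecMul_Q : u ᵥ* Q = (u ⬝ᵥ b) • c := by
    rw [hQ, Matrix.vecMul_add, ← Matrix.vecMul_vecMul, hu, Matrix.zero_vecMul, zero_add,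
      Matrix.vecMul_vecMulVec]
  calc Q.det • u = u ᵥ* (Q * Q.adjugate) := by
        rw [Matrix.mul_adjugate, Matrix.vecMul_smul, Matrix.vecMul_one]
    _ = (u ⬝ᵥ b) • (c ᵥ* Q.adjugate) := by
        rw [← Matrix.vecMul_vecMul, vecMul_Q, Matrix.smul_vecMul]

theorem eq_dotProduct_smul_of_vecMul_eq_zero {A : Matrix m n R} {u : m → R} (hu : u ᵥ* A = 0)
    {Y : Matrix n m R} {b c : m → R} (h : A * Y + Matrix.vecMulVec b c = 1) :
    u = (u ⬝ᵥ b) • c := by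
  simpa [h] using det_smul_eq_dotProduct_smul_of_vecMul_eq_zero hu Y b c

theorem vecMul_adjugate_ne_zero_and_vecMul_eq_zero {A : Matrix m n K}
    (hA : A.rank < Fintype.card m) {Y : Matrix n m K} {b c : m → K}
    (hdet : (A * Y + Matrix.vecMulVec b c).det ≠ 0) :
    c ᵥ* (A * Y + Matrix.vecMulVec b c).adjugate ≠ 0 ∧
      c ᵥ* (A * Y + Matrix.vecMulVec b c).adjugate ᵥ* A = 0 := by
  obtain ⟨u, hu, huA⟩ := exists_vecMul_eq_zero_of_rank_lt_card hA
  have proportional := det_smul_eq_dotProduct_smul_of_vecMul_eq_zero huA Y b c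
  have smul_ne_zero : (u ⬝ᵥ b) • (c ᵥ* (A * Y + Matrix.vecMulVec b c).adjugate) ≠ 0 :=
    proportional ▸ smul_ne_zero hdet hu
  obtain ⟨hub, hw⟩ := smul_ne_zero_iff.1 smul_ne_zero
  refine ⟨hw, (smul_eq_zero_iff_right hub).1 ?_⟩
  rw [← Matrix.smul_vecMul, ← proportional, Matrix.smul_vecMul, huA, smul_zero]

theorem exists_map_det_mul_add_vecMulVec_eq_one {φ : R →+* K} (hφ : Function.Surjective φ)
    {A : Matrix m n R} (hA : (A.map φ).rank + 1 = Fintype.card m) :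
    ∃ (Y : Matrix n m R) (b c : m → R), φ (A * Y + Matrix.vecMulVec b c).det = 1 := by
  obtain ⟨Y, b, c, h⟩ := exists_mul_add_vecMulVec_eq_one hA
  obtain ⟨s, hs⟩ := hφ.hasRightInverse
  refine ⟨Y.map s, s ∘ b, s ∘ c, ?_⟩
  have map_eq_one : (A * Y.map s + Matrix.vecMulVec (s ∘ b) (s ∘ c)).map φ = 1 := by
    rw [← h]
    ext i j
    simp [Matrix.mul_apply, Matrix.vecMulVec_apply, hs _]
  rw [RingHom.map_det, RingHom.mapMatrix_apply, map_eq_one, Matrix.det_one]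

end

/-- A vector is primitive if its entries have no common factor. The condition is stated as
`gcd (u i * y) = y` for all `y`, which avoids choosing a gcd operation. -/
def IsPrimitiveVector (u : m → R) : Prop :=
  ∀ x y, (∀ i, x ∣ u i * y) → x ∣ y

theorem exists_isPrimitiveVector_eq_smul [IsDomain R] [UniqueFactorizationMonoid R] [Finite m]
    [Nonempty m] (u : m → R) : ∃ (g : R) (w : m → R), IsPrimitiveVector w ∧ u = g • w := by
  have := Fintype.ofFinite m
  let _ : StrongNormalizationMonoid R := UniqueFactorizationMonoid.strongNormalizationMonoid
  let _ : NormalizedGCDMonoid R := UniqueFactorizationMonoid.toNormalizedGCDMonoid R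
  obtain ⟨w, hu, hw⟩ := Finset.extract_gcd u Finset.univ_nonempty
  refine ⟨_, w, fun x y hxy => ?_, funext fun i => hu i (Finset.mem_univ i)⟩
  have gcd_mul : Associated (Finset.univ.gcd fun i => w i * y) y := by
    simpa [hw] using Finset.gcd_mul_right' Finset.univ w y
  exact gcd_mul.dvd_iff_dvd_right.1 (Finset.dvd_gcd fun i _ => hxy i)

theorem IsPrimitiveVector.comp_ne_zero [Fintype m] [Fintype n] {u : m → R}
    (hu : IsPrimitiveVector u) {φ : R →+* K} (hφ : Function.Surjective φ) {A : Matrix m n R}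
    (huA : u ᵥ* A = 0) (hA : (A.map φ).rank + 1 = Fintype.card m) : φ ∘ u ≠ 0 := by
  classical
  intro h
  obtain ⟨Y, b, c, hdet⟩ := exists_map_det_mul_add_vecMulVec_eq_one hφ hA
  obtain ⟨z, hz⟩ : u ⬝ᵥ b ∣ (A * Y + Matrix.vecMulVec b c).det := hu _ _ fun i =>
    ⟨_, (mul_comm _ _).trans
      (congrFun (det_smul_eq_dotProduct_smul_of_vecMul_eq_zero huA Y b c) i)⟩
  have dotProduct_eq_zero : φ (u ⬝ᵥ b) = 0 := by
    rw [RingHom.map_dotProduct, h, zero_dotProduct]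
  simp [hz, dotProduct_eq_zero] at hdet

end LeftKernel

section RankBound

open scoped Matrix

variable {K m n p q : Type*} [Field K] [Fintype m] [Fintype n] [Fintype p]

theorem exists_eq_mul_add_mul_of_dotProduct_eq_zero [Fintype q] {A : Matrix m n K}
    {B : Matrix m p K} {C : Matrix q p K} (hA : A.rank + 1 = Fintype.card m)
    (hC : C.rank + 1 = Fintype.card p) {u : m → K} {v : p → K} (hu : u ≠ 0) (huA : u ᵥ* A = 0)
    (hv : v ≠ 0) (hCv : C *ᵥ v = 0) (hB : u ᵥ* B ⬝ᵥ v = 0) :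
    ∃ (X : Matrix n p K) (Z : Matrix m q K), B = A * X + Z * C := by
  classical
  obtain ⟨Y, b, c, hAY⟩ := exists_mul_add_vecMulVec_eq_one hA
  obtain ⟨W, b', c', hCW⟩ :=
    exists_mul_add_vecMulVec_eq_one (A := Cᵀ) (by rwa [Matrix.rank_transpose])
  have u_eq : u = (u ⬝ᵥ b) • c := eq_dotProduct_smul_of_vecMul_eq_zero huA hAY
  have v_eq : v = (v ⬝ᵥ b') • c' :=
    eq_dotProduct_smul_of_vecMul_eq_zero (by rwa [Matrix.vecMul_transpose]) hCW
  have left_split : A * Y * B + Matrix.vecMulVec b (c ᵥ* B) = B := by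
    rw [← Matrix.vecMulVec_mul, ← Matrix.add_mul, hAY, Matrix.one_mul]
  have right_split : Wᵀ * C + Matrix.vecMulVec c' b' = 1 := by
    simpa [Matrix.transpose_add, Matrix.transpose_mul, Matrix.transpose_vecMulVec] using
      congrArg Matrix.transpose hCW
  have pairing_eq_zero : c ᵥ* B ⬝ᵥ c' = 0 := by
    rw [u_eq, v_eq, Matrix.smul_vecMul, smul_dotProduct, dotProduct_smul] at hB
    refine (smul_eq_zero_iff_right ?_).1 ((smul_eq_zero_iff_right ?_).1 hB)
    · exact fun h => hv (by rw [v_eq, h, zero_smul])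
    · exact fun h => hu (by rw [u_eq, h, zero_smul])
  have row_eq : c ᵥ* B = c ᵥ* B ᵥ* Wᵀ ᵥ* C := by
    conv_lhs => rw [← Matrix.vecMul_one (c ᵥ* B), ← right_split, Matrix.vecMul_add,
      Matrix.vecMul_vecMulVec, pairing_eq_zero, zero_smul, add_zero, ← Matrix.vecMul_vecMul]
  refine ⟨Y * B, Matrix.vecMulVec b (c ᵥ* B ᵥ* Wᵀ), ?_⟩
  rw [← Matrix.mul_assoc, Matrix.vecMulVec_mul, ← row_eq, left_split]

theorem rank_fromBlocks_zero₂₁_le_of_dotProduct_eq_zero [Finite q] {A : Matrix m n K}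
    {B : Matrix m p K} {C : Matrix q p K} (hA : A.rank + 1 = Fintype.card m)
    (hC : C.rank + 1 = Fintype.card p) {u : m → K} {v : p → K} (hu : u ≠ 0) (huA : u ᵥ* A = 0)
    (hv : v ≠ 0) (hCv : C *ᵥ v = 0) (hB : u ᵥ* B ⬝ᵥ v = 0) :
    (Matrix.fromBlocks A B 0 C).rank ≤ A.rank + C.rank := by
  classical
  have := Fintype.ofFinite q
  obtain ⟨X, Z, rfl⟩ := exists_eq_mul_add_mul_of_dotProduct_eq_zero hA hC hu huA hv hCv hB
  have h := rank_fromBlocks_mul_zero₂₁_le A (1 : Matrix n n K) X Z (1 : Matrix q q K) C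
  rwa [Matrix.mul_one, Matrix.one_mul] at h

theorem rank_add_one_eq_card_of_mul_eq_zero {A : Matrix m n K} {B : Matrix m p K}
    {C : Matrix n p K} (hAC : A * C = 0)
    (hcard : Fintype.card n + 2 ≤ Fintype.card m + Fintype.card p)
    (hrank : Fintype.card m + Fintype.card p ≤ (Matrix.fromBlocks A B 0 C).rank + 1) :
    A.rank + 1 = Fintype.card m ∧ C.rank + 1 = Fintype.card p := by
  have rank_add_rank_le := Matrix.rank_add_rank_le_card_of_mul_eq_zero hAC
  have le_card_add_rank := rank_fromBlocks_zero₂₁_le_card_add_rank A B C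
  have le_rank_add_card := rank_fromBlocks_zero₂₁_le_rank_add_card A B C
  omega

end RankBound

section Polynomial

open scoped Matrix

variable {k σ : Type*} [Field k]

theorem eval_surjective (a : σ → k) : Function.Surjective (eval a) :=
  fun x => ⟨C x, eval_C x⟩

theorem exists_polynomial_eval_eq_eval_add_smul (f : MvPolynomial σ k) (p v : σ → k) :
    ∃ q : Polynomial k, ∀ t, q.eval t = eval (p + t • v) f := by
  refine ⟨aeval (fun i => Polynomial.C (p i) + Polynomial.C (v i) * Polynomial.X) f, fun t => ?_⟩
  induction f using MvPolynomial.induction_on with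
  | C a => simp
  | add f g hf hg => simp [hf, hg]
  | mul_X f i hf => simp [hf, mul_comm t]

theorem eval_add_eq_of_forall_eval_add_smul_ne_zero [IsAlgClosed k] {f : MvPolynomial σ k}
    {p v : σ → k} (h : ∀ t : k, eval (p + t • v) f ≠ 0) : eval (p + v) f = eval p f := by
  obtain ⟨q, hq⟩ := exists_polynomial_eval_eq_eval_add_smul f p v
  have degree_eq_zero : q.degree = 0 := by
    by_contra hdeg
    obtain ⟨t, ht⟩ := IsAlgClosed.exists_root q hdeg
    exact h t (hq t ▸ ht)
  obtain ⟨x, rfl⟩ : ∃ x, q = Polynomial.C x := ⟨_, Polynomial.eq_C_of_degree_eq_zero degree_eq_zero⟩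
  have eval_one := hq 1
  have eval_zero := hq 0
  simp only [Polynomial.eval_C, one_smul, zero_smul, add_zero] at eval_one eval_zero
  rw [← eval_one, ← eval_zero]

theorem eval_eq_of_forall_ne_zero_eval_add_smul_eq [Infinite k] {f : MvPolynomial σ k}
    {p v : σ → k} {x : k} (h : ∀ t : k, t ≠ 0 → eval (p + t • v) f = x) : eval p f = x := by
  obtain ⟨q, hq⟩ := exists_polynomial_eval_eq_eval_add_smul f p v
  have eq_const : q = Polynomial.C x := by
    refine Polynomial.eq_of_infinite_eval_eq _ _
      ((Set.finite_singleton (0 : k)).infinite_compl.mono fun t ht => ?_)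
    simpa [hq] using h t ht
  simpa [eq_const, eq_comm] using hq 0

theorem exists_ne_eval_eq_zero [IsAlgClosed k] [Nontrivial σ] {f : MvPolynomial σ k} {p : σ → k}
    (hp : eval p f = 0) : ∃ a ≠ p, eval a f = 0 := by
  classical
  by_contra! h
  have : Infinite k := IsAlgClosed.instInfinite
  obtain ⟨i, j, hij⟩ := exists_pair_ne σ
  let e : σ → k := Pi.single i 1
  let e' : σ → k := Pi.single j 1
  -- The lines `p + t • e + k e'` (for `t ≠ 0`) and `p + e' + k e` miss `p`, so `f` is constant
  -- on each of them.
  have eval_add_e' : ∀ t : k, t ≠ 0 → eval (p + t • e + e') f = eval (p + t • e) f := fun t ht =>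
    eval_add_eq_of_forall_eval_add_smul_ne_zero fun s => h _ fun hs =>
      ht (by simpa [e, e', hij] using congrFun hs i)
  have eval_add_smul_e : ∀ t : k, eval (p + e' + t • e) f = eval (p + e') f := fun t =>
    eval_add_eq_of_forall_eval_add_smul_ne_zero fun s => h _ fun hs =>
      one_ne_zero (α := k) (by simpa [e, e', hij.symm] using congrFun hs j)
  have eval_p : eval p f = eval (p + e') f :=
    eval_eq_of_forall_ne_zero_eval_add_smul_eq (v := e) fun t ht => by
      rw [← eval_add_e' t ht, add_right_comm, eval_add_smul_e]
  exact h (p + e') (by simp [e']) (eval_p ▸ hp)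

theorem eq_zero_of_forall_ne_zero_eval_eq_zero [Infinite k] [Nonempty σ] {f : MvPolynomial σ k}
    (h : ∀ a ≠ 0, eval a f = 0) : f = 0 := by
  obtain ⟨i⟩ := ‹Nonempty σ›
  have X_mul_eq_zero : X i * f = 0 := by
    refine MvPolynomial.funext fun a => ?_
    by_cases ha : a = 0
    · simp [ha]
    · simp [h a ha]
  exact (mul_eq_zero.1 X_mul_eq_zero).resolve_left (X_ne_zero i)

variable {m n p : Type*} [Fintype m] [Fintype n] [Fintype p]

theorem exists_ne_zero_vecMul_eq_zero [Infinite k] [Nonempty σ] {A : Matrix m n (MvPolynomial σ k)}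
    (hA : ∀ a : σ → k, a ≠ 0 → (A.map (eval a)).rank + 1 = Fintype.card m) :
    ∃ u ≠ 0, u ᵥ* A = 0 := by
  classical
  obtain ⟨Y, b, c, hdet⟩ :=
    exists_map_det_mul_add_vecMulVec_eq_one (eval_surjective 1) (hA 1 one_ne_zero)
  set Q := A * Y + Matrix.vecMulVec b c with hQ
  have kernel_at : ∀ a : σ → k, a ≠ 0 → eval a Q.det ≠ 0 →
      eval a ∘ (c ᵥ* Q.adjugate) ≠ 0 ∧ (eval a ∘ (c ᵥ* Q.adjugate)) ᵥ* A.map (eval a) = 0 := by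
    intro a ha hdet
    have map_Q : Q.map (eval a) =
        A.map (eval a) * Y.map (eval a) + Matrix.vecMulVec (eval a ∘ b) (eval a ∘ c) := by
      ext i j
      simp [hQ, Matrix.mul_apply, Matrix.vecMulVec_apply]
    have map_vecMul : eval a ∘ (c ᵥ* Q.adjugate) = (eval a ∘ c) ᵥ* (Q.map (eval a)).adjugate := by
      rw [← RingHom.mapMatrix_apply, ← RingHom.map_adjugate]
      exact funext fun i => RingHom.map_vecMul _ _ _ i
    rw [RingHom.map_det, RingHom.mapMatrix_apply, map_Q] at hdet
    rw [map_vecMul, map_Q]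
    exact vecMul_adjugate_ne_zero_and_vecMul_eq_zero (hA a ha ▸ Nat.lt_succ_self _) hdet
  have det_smul_vecMul_eq_zero : Q.det • (c ᵥ* Q.adjugate ᵥ* A) = 0 := by
    refine funext fun j => eq_zero_of_forall_ne_zero_eval_eq_zero fun a ha => ?_
    rw [Pi.smul_apply, smul_eq_mul, map_mul, mul_eq_zero, or_iff_not_imp_left, RingHom.map_vecMul]
    exact fun hdet => congrFun (kernel_at a ha hdet).2 j
  refine ⟨c ᵥ* Q.adjugate, fun h => ?_, (smul_eq_zero_iff_right ?_).1 det_smul_vecMul_eq_zero⟩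
  · exact (kernel_at 1 one_ne_zero (hdet ▸ one_ne_zero)).1 (by rw [h]; ext; simp)
  · intro h
    simp [h] at hdet

theorem exists_vecMul_eq_zero_and_forall_eval_ne_zero [Infinite k] [Nonempty σ]
    {A : Matrix m n (MvPolynomial σ k)}
    (hA : ∀ a : σ → k, a ≠ 0 → (A.map (eval a)).rank + 1 = Fintype.card m) :
    ∃ u, u ᵥ* A = 0 ∧ ∀ a : σ → k, a ≠ 0 → eval a ∘ u ≠ 0 := by
  classical
  obtain ⟨u, hu, huA⟩ := exists_ne_zero_vecMul_eq_zero hA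
  obtain ⟨i, -⟩ := Function.ne_iff.1 hu
  have : Nonempty m := ⟨i⟩
  obtain ⟨g, w, hw, rfl⟩ := exists_isPrimitiveVector_eq_smul u
  have hwA : w ᵥ* A = 0 := by
    rw [Matrix.smul_vecMul] at huA
    exact (smul_eq_zero_iff_right (smul_ne_zero_iff.1 hu).1).1 huA
  exact ⟨w, hwA, fun a ha => hw.comp_ne_zero (eval_surjective a) hwA (hA a ha)⟩

theorem subsingleton_of_card_add_card_le_rank_fromBlocks_add_one [IsAlgClosed k]
    {A : Matrix m n (MvPolynomial σ k)} {B : Matrix m p (MvPolynomial σ k)}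
    {C : Matrix n p (MvPolynomial σ k)} (hAC : A * C = 0) (hB : B.map (eval 0) = 0)
    (hcard : Fintype.card n + 2 ≤ Fintype.card m + Fintype.card p)
    (hrank : ∀ a : σ → k, a ≠ 0 → Fintype.card m + Fintype.card p ≤
      (Matrix.fromBlocks (A.map (eval a)) (B.map (eval a)) 0 (C.map (eval a))).rank + 1) :
    Subsingleton σ := by
  by_contra! hσ
  have : Infinite k := IsAlgClosed.instInfinite
  have rank_blocks (a : σ → k) (ha : a ≠ 0) := rank_add_one_eq_card_of_mul_eq_zero
    (by rw [← Matrix.map_mul, hAC, Matrix.map_zero _ (map_zero _)]) hcard (hrank a ha)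
  obtain ⟨u, huA, hu⟩ := exists_vecMul_eq_zero_and_forall_eval_ne_zero fun a ha =>
    (rank_blocks a ha).1
  obtain ⟨v, hvC, hv⟩ := exists_vecMul_eq_zero_and_forall_eval_ne_zero (A := Cᵀ) fun a ha => by
    rw [Matrix.transpose_map, Matrix.rank_transpose, (rank_blocks a ha).2]
  have eval_pairing (a : σ → k) :
      eval a (u ᵥ* B ⬝ᵥ v) = (eval a ∘ u) ᵥ* B.map (eval a) ⬝ᵥ (eval a ∘ v) := by
    rw [RingHom.map_dotProduct]
    congr 1
    exact funext fun j => RingHom.map_vecMul _ _ _ j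
  have pairing_zero : eval 0 (u ᵥ* B ⬝ᵥ v) = 0 := by
    rw [eval_pairing, hB, Matrix.vecMul_zero, zero_dotProduct]
  obtain ⟨a, ha, pairing_a⟩ := exists_ne_eval_eq_zero pairing_zero
  have huA_at : (eval a ∘ u) ᵥ* A.map (eval a) = 0 := by
    ext j
    rw [← RingHom.map_vecMul, huA, Pi.zero_apply, map_zero, Pi.zero_apply]
  have hCv_at : C.map (eval a) *ᵥ (eval a ∘ v) = 0 := by
    ext i
    rw [← RingHom.map_mulVec, ← Matrix.vecMul_transpose, hvC, Pi.zero_apply, map_zero,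
      Pi.zero_apply]
  obtain ⟨hA, hC⟩ := rank_blocks a ha
  have rank_le := rank_fromBlocks_zero₂₁_le_of_dotProduct_eq_zero hA hC (hu a ha) huA_at (hv a ha)
    hCv_at (eval_pairing a ▸ pairing_a)
  have le_rank := hrank a ha
  omega

end Polynomial

section ThreeStep

variable {R ι : Type*} [Fintype ι] {D : Matrix ι ι R} {b : ι → Fin 3}

theorem toBlock_mul_toBlock_eq_zero [CommRing R] (hD : ∀ i j, b j ≤ b i → D i j = 0)
    (hDD : D * D = 0) :
    D.toBlock (b · = 0) (b · = 1) * D.toBlock (b · = 1) (b · = 2) = 0 := by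
  have split := Matrix.toBlock_mul_eq_add (b · = 0) (b · = 1) (b · = 2) D D
  have complement_eq_zero :
      D.toBlock (b · = 0) (b · ≠ 1) * D.toBlock (b · ≠ 1) (b · = 2) = 0 := by
    ext ⟨i, hi⟩ ⟨j, hj⟩
    refine Finset.sum_eq_zero fun ⟨x, hx⟩ _ => ?_
    obtain h | h : b x ≤ b i ∨ b j ≤ b x := by omega
    · simp [Matrix.toBlock_apply, hD i x h]
    · simp [Matrix.toBlock_apply, hD x j h]
  rw [hDD, complement_eq_zero, add_zero] at split
  exact split.symm

theorem rank_le_rank_fromBlocks_toBlock [Field R] (hD : ∀ i j, b j ≤ b i → D i j = 0) :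
    D.rank ≤ (Matrix.fromBlocks (D.toBlock (b · = 0) (b · = 1)) (D.toBlock (b · = 0) (b · = 2)) 0
      (D.toBlock (b · = 1) (b · = 2))).rank := by
  let rows : {i // b i = 0} ⊕ {i // b i = 1} → ι := Sum.elim Subtype.val Subtype.val
  let cols : {i // b i = 1} ⊕ {i // b i = 2} → ι := Sum.elim Subtype.val Subtype.val
  have blocks_eq : Matrix.fromBlocks (D.toBlock (b · = 0) (b · = 1))
      (D.toBlock (b · = 0) (b · = 2)) 0 (D.toBlock (b · = 1) (b · = 2)) =
        D.submatrix rows cols := by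
    ext (i | i) (j | j)
    case inr.inl => exact (hD i j (j.2.trans i.2.symm).le).symm
    all_goals rfl
  have b_of_notMem_rows : ∀ i ∉ Set.range rows, b i = 2 := fun i hi => by
    have h0 : b i ≠ 0 := fun h => hi ⟨Sum.inl ⟨i, h⟩, rfl⟩
    have h1 : b i ≠ 1 := fun h => hi ⟨Sum.inr ⟨i, h⟩, rfl⟩
    omega
  have b_of_notMem_cols : ∀ j ∉ Set.range cols, b j = 0 := fun j hj => by
    have h1 : b j ≠ 1 := fun h => hj ⟨Sum.inl ⟨j, h⟩, rfl⟩
    have h2 : b j ≠ 2 := fun h => hj ⟨Sum.inr ⟨j, h⟩, rfl⟩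
    omega
  rw [blocks_eq]
  exact rank_le_rank_submatrix D rows cols
    (fun i hi => funext fun j => hD i j (b_of_notMem_rows i hi ▸ Fin.le_last _))
    (fun j hj => funext fun i => hD i j (b_of_notMem_cols j hj ▸ Fin.zero_le _))

end ThreeStep

theorem statement_12_general {k σ ι : Type*} [Field k] [IsAlgClosed k] [Fintype ι]
    {D : Matrix ι ι (MvPolynomial σ k)} (b : ι → Fin 3) (hD : ∀ i j, b j ≤ b i → D i j = 0)
    (hDD : D * D = 0) (h0 : ∀ i j, eval 0 (D i j) = 0)
    (hcard : Fintype.card {i // b i = 1} + 2 ≤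
      Fintype.card {i // b i = 0} + Fintype.card {i // b i = 2})
    (hrank : ∀ a : σ → k, a ≠ 0 →
      Fintype.card {i // b i = 0} + Fintype.card {i // b i = 2} ≤ (D.map (eval a)).rank + 1) :
    Subsingleton σ :=
  subsingleton_of_card_add_card_le_rank_fromBlocks_add_one
    (toBlock_mul_toBlock_eq_zero hD hDD) (Matrix.ext fun i j => h0 i j) hcard fun a ha =>
    (hrank a ha).trans <| Nat.succ_le_succ <|
      rank_le_rank_fromBlocks_toBlock fun i j hij => by simp [hD i j hij]

theorem statement_12 {k : Type*} [Field k] [IsAlgClosed k] {r : ℕ}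
    (D : Matrix (Fin 8) (Fin 8) (MvPolynomial (Fin r) k))
    (hstd : StandardConditions D)
    (hzero : (∀ i j : Fin 8,
        ¬((1 ≤ (i : ℕ) + 1 ∧ (i : ℕ) + 1 ≤ 2 ∧ 3 ≤ (j : ℕ) + 1 ∧ (j : ℕ) + 1 ≤ 8) ∨
          (3 ≤ (i : ℕ) + 1 ∧ (i : ℕ) + 1 ≤ 5 ∧ 6 ≤ (j : ℕ) + 1 ∧ (j : ℕ) + 1 ≤ 8)) →
        D i j = 0) ∨
      (∀ i j : Fin 8,
        ¬((1 ≤ (i : ℕ) + 1 ∧ (i : ℕ) + 1 ≤ 3 ∧ 4 ≤ (j : ℕ) + 1 ∧ (j : ℕ) + 1 ≤ 8) ∨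
          (4 ≤ (i : ℕ) + 1 ∧ (i : ℕ) + 1 ≤ 6 ∧ 7 ≤ (j : ℕ) + 1 ∧ (j : ℕ) + 1 ≤ 8)) →
        D i j = 0)) :
    r < 2 := by
  obtain ⟨-, hDD, h0, hrank, -⟩ := hstd
  rw [← Nat.le_iff_lt_add_one, ← Fin.subsingleton_iff_le_one]
  obtain hD | hD := hzero
  · exact statement_12_general ![0, 0, 1, 1, 1, 2, 2, 2] (fun i j hij => hD i j (by decide +revert))
      hDD h0 (by decide) fun a ha => (hrank a ha).symm ▸ by decide
  · exact statement_12_general ![0, 0, 0, 1, 1, 1, 2, 2] (fun i j hij => hD i j (by decide +revert))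
      hDD h0 (by decide) fun a ha => (hrank a ha).symm ▸ by decide
end
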